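/- For a natural number q ≥ 3, define d(q) = ∏_{j=0}^{q−3} (q+j−1)(q+j) and e(q) = ∏_{j=0}^{q−3} (j+1)(j+2). Then e(q) divides d(q), and the quotient d(q)/e(q) is odd if and only if the binary expansions of q−2 and q−1 are disjoint, i.e. the bitwise AND of q−2 and q−1 equals 0. -/

import Mathlib

theorem aux_odd (n : ℕ) : Odd ((2 * n + 1).choose n) ↔ n &&& (n + 1) = 0 := by
  have : Fact (Nat.Prime 2) := ⟨Nat.prime_two⟩
  induction n using Nat.strong_induction_on with
  | _ n ih =>
    have hl := Choose.choose_modEq_choose_mod_mul_choose_div_nat (p := 2) (n := 2 * n + 1) (k := n)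
    have h1 : (2 * n + 1) % 2 = 1 := by omega
    have h2 : (2 * n + 1) / 2 = n := by omega
    rw [h1, h2] at hl
    have hodd : Odd ((2 * n + 1).choose n) ↔ Odd (n.choose (n / 2)) := by
      have : Nat.choose 1 (n % 2) = 1 := by
        rcases Nat.mod_two_eq_zero_or_one n with h | h <;> simp [h]
      rw [this, one_mul] at hl
      rw [Nat.odd_iff, Nat.odd_iff, hl]
    rw [hodd]
    rcases Nat.even_or_odd' n with ⟨m, rfl | rfl⟩
    · have hm : 2 * m / 2 = m := by omega
      rw [hm]
      rcases Nat.eq_zero_or_pos m with rfl | hp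
      · simp
      · have he : Even ((2 * m).choose m) := by
          have := Nat.two_dvd_centralBinom_of_one_le hp
          rw [Nat.centralBinom_eq_two_mul_choose] at this
          exact even_iff_two_dvd.2 this
        have hne : (2 * m) &&& (2 * m + 1) ≠ 0 := by
          intro h
          have h3 := congrArg (· / 2) h
          simp only [Nat.and_div_two] at h3
          have h4 : (2 * m + 1) / 2 = m := by omega
          rw [hm, h4, Nat.and_self] at h3
          omega
        simp [hne, he]
    · have hm : (2 * m + 1) / 2 = m := by omega
      have hi : Odd ((2 * m + 1).choose m) ↔ m &&& (m + 1) = 0 := ih m (by omega)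
      rw [hm, hi]
      have h3 : ((2 * m + 1) &&& (2 * m + 1 + 1)) / 2 = m &&& (m + 1) := by
        rw [Nat.and_div_two, hm]
        congr 1
        omega
      have h4 : ((2 * m + 1) &&& (2 * m + 1 + 1)) % 2 = 0 := by
        have h5 := Nat.and_mod_two_pow (a := 2 * m + 1) (b := 2 * m + 1 + 1) (n := 1)
        rw [pow_one] at h5
        rw [h5, show (2 * m + 1 + 1) % 2 = 0 by omega, Nat.and_zero]
      omega

theorem aux_e (n : ℕ) : (∏ j ∈ Finset.range n, (j + 1) * (j + 2)) = n.factorial * (n + 1).factorial := by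
  induction n with
  | zero => simp
  | succ k ih =>
    rw [Finset.prod_range_succ, ih, Nat.factorial_succ (k + 1), Nat.factorial_succ k]
    ring

theorem aux_p (a n : ℕ) : a.factorial * ∏ j ∈ Finset.range n, (a + 1 + j) = (a + n).factorial := by
  induction n with
  | zero => simp
  | succ k ih =>
    rw [Finset.prod_range_succ, ← mul_assoc, ih, ← add_assoc, Nat.factorial_succ]
    ring

theorem aux_d (n : ℕ) : (∏ j ∈ Finset.range n, (n + 2 + j - 1) * (n + 2 + j)) =
    (n.factorial * (n + 1).factorial) * ((2 * n + 1) * catalan n ^ 2) ∧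
    (2 * n + 1).choose n = (2 * n + 1) * catalan n := by
  have hc := succ_mul_catalan_eq_centralBinom n
  have h0 : n.centralBinom * n.factorial * n.factorial = (2 * n).factorial := by
    rw [Nat.centralBinom_eq_two_mul_choose]
    have := Nat.choose_mul_factorial_mul_factorial (n := 2 * n) (k := n) (by omega)
    rwa [show 2 * n - n = n by omega] at this
  have hf : (2 * n).factorial = catalan n * n.factorial * (n + 1).factorial := by
    rw [← h0, ← hc, Nat.factorial_succ]; ring
  have p1 := aux_p n n
  have p2 := aux_p (n + 1) n
  have hn := Nat.factorial_pos n
  have hn1 := Nat.factorial_pos (n + 1)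
  rw [← two_mul, hf] at p1
  rw [show n + 1 + n = 2 * n + 1 by ring, Nat.factorial_succ (2 * n), hf] at p2
  constructor
  · rw [Finset.prod_mul_distrib]
    have e1 : ∏ j ∈ Finset.range n, (n + 2 + j - 1) = ∏ j ∈ Finset.range n, (n + 1 + j) :=
      Finset.prod_congr rfl fun j _ => by omega
    rw [e1]
    have q1 : ∏ j ∈ Finset.range n, (n + 1 + j) = catalan n * (n + 1).factorial :=
      Nat.eq_of_mul_eq_mul_left hn (by rw [p1]; ring)
    have q2 : ∏ j ∈ Finset.range n, (n + 2 + j) = (2 * n + 1) * catalan n * n.factorial :=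
      Nat.eq_of_mul_eq_mul_left hn1 (by rw [p2]; ring)
    rw [q1, q2]; ring
  · have := Nat.choose_mul_factorial_mul_factorial (n := 2 * n + 1) (k := n) (by omega)
    rw [show 2 * n + 1 - n = n + 1 by omega, Nat.factorial_succ (2 * n), hf] at this
    refine Nat.eq_of_mul_eq_mul_right (Nat.mul_pos hn hn1) ?_
    rw [← mul_assoc, this]; ring

theorem degree_odd_iff_binary_disjoint (q : ℕ) (hq : 3 ≤ q) :
    (∏ j ∈ Finset.range (q - 2), (j + 1) * (j + 2)) ∣
        (∏ j ∈ Finset.range (q - 2), (q + j - 1) * (q + j)) ∧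
      (Odd ((∏ j ∈ Finset.range (q - 2), (q + j - 1) * (q + j)) /
          (∏ j ∈ Finset.range (q - 2), (j + 1) * (j + 2))) ↔
        (q - 2) &&& (q - 1) = 0) := by
  obtain ⟨n, rfl⟩ : ∃ n, q = n + 2 := ⟨q - 2, by omega⟩
  rw [show n + 2 - 2 = n by omega, show n + 2 - 1 = n + 1 by omega]
  obtain ⟨hd, hc⟩ := aux_d n
  rw [aux_e, hd]
  refine ⟨Dvd.intro _ rfl, ?_⟩
  rw [Nat.mul_div_cancel_left _ (Nat.mul_pos (Nat.factorial_pos _) (Nat.factorial_pos _)),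
    ← aux_odd, hc, Nat.odd_mul, Nat.odd_mul, Nat.odd_pow_iff (by norm_num)]
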